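/- arXiv:2205.09243 — 3 statements merged into one kernel-verified Lean document; each statement's English description precedes it below -/
import Mathlib

section
/- For every integer d ≥ 1 there exists a constant K = K(d) > 0 with the following property. Let n entities of radius ρ ≥ 0 move in ℝ^d along 1-Lipschitz trajectories ζ_1, …, ζ_n that are non-overlapping at all times, let 1 ≤ x < y ≤ n−1 be integers, and assume σ_i(y,t) > 0 for all i and all t. Let T = [a, b] be a nondegenerate compact time interval, set H(T) := Σ_{i=1}^n ∫_T dt / r_i(y,t), and assume H(T) ≥ 1010·n. Let T⃗ be T shifted to the right by (b−a)/2^55 and T⁺ := T ∪ T⃗. Then for every query schedule whose uncertainty ply is at most x at every time of T⁺, either the number of queries during T is at least ((y − x + 1)/(K·y))·H(T), or the number of queries during T⃗ is at least ((y − x + 1)/(K·y))·H(T). -/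
open Metric Set
open scoped ENNReal

/-- The `x`-separation of entity `i` in the configuration `z` of entities of radius `ρ`:
the `x`-th smallest value of `dist (z i) (z j) - 2ρ` over `j ≠ i`. -/
noncomputable def xSep {d n : ℕ} (ρ : ℝ) (z : Fin n → EuclideanSpace ℝ (Fin d))
    (x : ℕ) (i : Fin n) : ℝ :=
  sInf {r : ℝ | x ≤ {j : Fin n | j ≠ i ∧ dist (z i) (z j) - 2 * ρ ≤ r}.ncard}

open Classical in
/-- The uncertainty region at time `t` of a mobile entity of radius `ρ` with trajectory `ζ`
and query-time set `Q`: the closed ball about `ζ (p t)` of radius `ρ + (t - p t)` where `p t`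
is the last query time at or before `t`, and all of space if there is no query before `t`. -/
noncomputable def uRegionM {d : ℕ} (ρ : ℝ) (ζ : ℝ → EuclideanSpace ℝ (Fin d))
    (Q : Set ℝ) (t : ℝ) : Set (EuclideanSpace ℝ (Fin d)) :=
  if (Q ∩ Set.Iic t).Nonempty then
    closedBall (ζ (sSup (Q ∩ Set.Iic t))) (ρ + (t - sSup (Q ∩ Set.Iic t)))
  else Set.univ

/-!
Let `r` be the `y`-radius of entity `i` at time `t`. At least `y + 1` entities could reach the point
`ζ i t` by time `t + r`, so ply at most `x` forces `y - x + 1` queries within time `r` and distance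
`3 * r`. Such a query is also forced by many other pairs `(j, u)`, so it is weighted by its local
scale: the smallest radius of an entity that has the query within six times its radius in space and
time.

If the queries forced by `(i, t)` have scale comparable to `r`, their total scale is at least a
constant times `(y - x + 1) * r`. Otherwise one of them leads to a nearby entity of much smaller
radius, whose forced queries are considered instead. Following such a walk until it has advanced a
constant times `r` while collecting queries shows that the total scale of the queries within `6 * r`
of `(i, t)` is always at least a constant times `(y - x + 1) * r`. So if every query of scale `l`
pays `l / r ^ 2` to each such `(i, t)`, then `(i, t)` receives at least a constant times
`(y - x + 1) / r`.

Conversely, at most `y` centers lie at distance less than its `y`-radius from an entity. Hence, by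
packing at dyadic scales, a query of scale `l` at time `s` pays at most a constant times
`y * l / (l ^ 2 + (s - t) ^ 2)` in total at time `t`, which integrates to `O(y)`. Only the times `t`
within `6 * r` of the end `e` of the observed interval are not covered; there `1 / r` is at most
`6 / (e - t)`, so they contribute a logarithm per entity.
-/

open MeasureTheory
open scoped Finset Topology

section Packing

variable {ι E : Type*} [Fintype ι] [NormedAddCommGroup E] [NormedSpace ℝ E]
  {F : Finset E} {z : ι → E} {r : ι → ℝ} {y : ℕ} {I : Finset ι}

lemma card_le_mul_of_isCover {R l : ℝ} (hF : IsCover (1 / 3) (closedBall (0 : E) R) (F : Set E))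
    (hpack : ∀ i, #{j | dist (z i) (z j) < r i} ≤ y) (q : E) (hl : 0 < l)
    (hdist : ∀ i ∈ I, dist q (z i) ≤ R * l) (hlr : ∀ i ∈ I, l ≤ r i) :
    #I ≤ y * #F := by
  classical
  have hcover : ∀ i ∈ I, ∃ c ∈ F, dist (l⁻¹ • (z i - q)) c ≤ 1 / 3 := by
    intro i hi
    have hmem : l⁻¹ • (z i - q) ∈ closedBall (0 : E) R := by
      rw [mem_closedBall, dist_zero_right, norm_smul, norm_inv, Real.norm_of_nonneg hl.le,
        ← dist_eq_norm, dist_comm, inv_mul_le_iff₀ hl, mul_comm]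
      exact hdist i hi
    simpa using isCover_iff_subset_iUnion_closedBall.1 hF hmem
  choose! c hcF hc using hcover
  refine Finset.card_le_mul_card_image_of_maps_to hcF y fun b _ ↦ ?_
  rcases ({i ∈ I | c i = b} : Finset ι).eq_empty_or_nonempty with hempty | ⟨i, hi⟩
  · simp [hempty]
  obtain ⟨hiI, rfl⟩ := Finset.mem_filter.1 hi
  refine (Finset.card_le_card fun j hj ↦ ?_).trans (hpack i)
  obtain ⟨hjI, hji⟩ := Finset.mem_filter.1 hj
  have hclose : dist (l⁻¹ • (z i - q)) (l⁻¹ • (z j - q)) < 1 := by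
    linarith [dist_triangle_right (l⁻¹ • (z i - q)) (l⁻¹ • (z j - q)) (c i), hc i hiI,
      hji ▸ hc j hjI]
  rw [dist_smul₀, norm_inv, Real.norm_of_nonneg hl.le, dist_sub_right, inv_mul_lt_iff₀ hl,
    mul_one] at hclose
  exact Finset.mem_filter.2 ⟨Finset.mem_univ j, hclose.trans_le (hlr i hiI)⟩

lemma sum_one_div_sq_le_of_le_two_mul {C l : ℝ} (hC : 0 ≤ C)
    (hF : IsCover (1 / 3) (closedBall (0 : E) (2 * C)) (F : Set E))
    (hpack : ∀ i, #{j | dist (z i) (z j) < r i} ≤ y) (q : E) (hl : 0 < l)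
    (hdist : ∀ i ∈ I, dist q (z i) ≤ C * r i) (hlr : ∀ i ∈ I, l ≤ r i)
    (hrl : ∀ i ∈ I, r i ≤ 2 * l) :
    ∑ i ∈ I, 1 / r i ^ 2 ≤ y * #F / l ^ 2 := by
  have hcard : #I ≤ y * #F := card_le_mul_of_isCover hF hpack q hl
    (fun i hi ↦ by linarith [hdist i hi, mul_le_mul_of_nonneg_left (hrl i hi) hC]) hlr
  calc ∑ i ∈ I, 1 / r i ^ 2
      ≤ #I • (1 / l ^ 2) := Finset.sum_le_card_nsmul _ _ _ fun i hi ↦ by gcongr; exact hlr i hi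
    _ ≤ (y * #F : ℕ) * (1 / l ^ 2) := by rw [nsmul_eq_mul]; gcongr
    _ = y * #F / l ^ 2 := by push_cast; ring

lemma sum_one_div_sq_le_of_isCover {C m : ℝ} (hC : 0 ≤ C)
    (hF : IsCover (1 / 3) (closedBall (0 : E) (2 * C)) (F : Set E))
    (hpack : ∀ i, #{j | dist (z i) (z j) < r i} ≤ y) (q : E) (hm : 0 < m)
    (hdist : ∀ i ∈ I, dist q (z i) ≤ C * r i) (hmr : ∀ i ∈ I, m ≤ r i) :
    ∑ i ∈ I, 1 / r i ^ 2 ≤ 4 / 3 * (y * #F) / m ^ 2 := by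
  have hscale : ∀ i ∈ I, ∃ k : ℕ, m * 2 ^ k ≤ r i ∧ r i ≤ 2 * (m * 2 ^ k) := by
    intro i hi
    obtain ⟨k, hk, hk'⟩ := exists_nat_pow_near ((one_le_div hm).2 (hmr i hi)) one_lt_two
    rw [le_div_iff₀' hm] at hk
    rw [div_lt_iff₀' hm, pow_succ] at hk'
    exact ⟨k, hk, by linarith⟩
  choose! k hk hk' using hscale
  have hlevel (j : ℕ) :
      ∑ i ∈ I with k i = j, 1 / r i ^ 2 ≤ y * #F / m ^ 2 * (1 / 4 : ℝ) ^ j := by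
    have hmem {i : ι} (hi : i ∈ ({i ∈ I | k i = j} : Finset ι)) : i ∈ I ∧ k i = j :=
      Finset.mem_filter.1 hi
    have hfour : (4 : ℝ) ^ j = (2 ^ j) ^ 2 := by rw [← pow_mul, mul_comm, pow_mul]; norm_num
    refine (sum_one_div_sq_le_of_le_two_mul hC hF hpack q (l := m * 2 ^ j) (by positivity)
      (fun i hi ↦ hdist i (hmem hi).1) (fun i hi ↦ (hmem hi).2 ▸ hk i (hmem hi).1)
      (fun i hi ↦ (hmem hi).2 ▸ hk' i (hmem hi).1)).trans_eq ?_
    rw [one_div_pow, hfour]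
    field_simp
  have hgeom : ∑ j ∈ I.image k, (1 / 4 : ℝ) ^ j ≤ 4 / 3 := by
    refine ((summable_geometric_of_lt_one (by norm_num) (by norm_num)).sum_le_tsum _
      fun _ _ ↦ by positivity).trans_eq ?_
    rw [tsum_geometric_of_lt_one (by norm_num) (by norm_num)]
    norm_num
  calc ∑ i ∈ I, 1 / r i ^ 2
      = ∑ j ∈ I.image k, ∑ i ∈ I with k i = j, 1 / r i ^ 2 :=
        (Finset.sum_fiberwise_of_maps_to (fun _ ↦ Finset.mem_image_of_mem k) _).symm
    _ ≤ ∑ j ∈ I.image k, y * #F / m ^ 2 * (1 / 4 : ℝ) ^ j := Finset.sum_le_sum fun j _ ↦ hlevel j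
    _ ≤ y * #F / m ^ 2 * (4 / 3) := by rw [← Finset.mul_sum]; gcongr
    _ = 4 / 3 * (y * #F) / m ^ 2 := by ring

end Packing

section Separation

lemma exists_isLeast_le_ncard {ι α : Type*} [Finite ι] [LinearOrder α] (f : ι → α) {s : Set ι}
    {x : ℕ} (hx : 1 ≤ x) (hxs : x ≤ s.ncard) :
    ∃ r, IsLeast {r | x ≤ {j | j ∈ s ∧ f j ≤ r}.ncard} r := by
  set S := {r | x ≤ {j | j ∈ s ∧ f j ≤ r}.ncard}
  have mem_of_forall_le {u : Set ι} (hu : x ≤ u.ncard) (hus : u ⊆ s) {r : α}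
      (hr : ∀ j ∈ u, f j ≤ r) : r ∈ S :=
    hu.trans (ncard_le_ncard fun j hj ↦ ⟨hus hj, hr j hj⟩)
  have exists_value {u : Set ι} (hu : x ≤ u.ncard) (hus : u ⊆ s) : ∃ j ∈ u, f j ∈ S := by
    obtain ⟨j, hj, hmax⟩ := exists_max_image u f u.toFinite ((ncard_pos).1 (hx.trans hu))
    exact ⟨j, hj, mem_of_forall_le hu hus hmax⟩
  obtain ⟨j₀, -, hj₀⟩ := exists_value hxs subset_rfl
  obtain ⟨j, hj, hmin⟩ := exists_min_image {j | f j ∈ S} f (toFinite _) ⟨j₀, hj₀⟩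
  refine ⟨f j, hj, fun r hr ↦ ?_⟩
  obtain ⟨k, hk, hkS⟩ := exists_value hr fun j hj ↦ hj.1
  exact (hmin k hkS).trans hk.2

variable {d n x : ℕ} {ρ : ℝ} {z : Fin n → EuclideanSpace ℝ (Fin d)}

lemma isLeast_xSep (ρ : ℝ) (z : Fin n → EuclideanSpace ℝ (Fin d)) (hx : 1 ≤ x) (hxn : x < n)
    (i : Fin n) :
    IsLeast {r : ℝ | x ≤ {j : Fin n | j ≠ i ∧ dist (z i) (z j) - 2 * ρ ≤ r}.ncard}
      (xSep ρ z x i) := by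
  have hothers : x ≤ {j : Fin n | j ≠ i}.ncard := by
    have := ncard_add_ncard_compl {i}
    rw [ncard_singleton, Nat.card_fin] at this
    exact show x ≤ ({i}ᶜ : Set (Fin n)).ncard by omega
  obtain ⟨r, hr⟩ := exists_isLeast_le_ncard (fun j ↦ dist (z i) (z j) - 2 * ρ) hx hothers
  have hxSep : xSep ρ z x i = r := hr.csInf_eq
  rw [hxSep]
  exact hr

lemma succ_le_card_dist_le_xSep (hx : 1 ≤ x) (hxn : x < n) {i : Fin n}
    (hpos : 0 ≤ 2 * ρ + xSep ρ z x i) :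
    x + 1 ≤ #{j | dist (z i) (z j) ≤ 2 * ρ + xSep ρ z x i} := by
  have hi : i ∈ ({j | dist (z i) (z j) ≤ 2 * ρ + xSep ρ z x i} : Finset (Fin n)) := by simpa
  rw [← Finset.card_erase_add_one hi, ← ncard_coe_finset]
  refine Nat.succ_le_succ ((isLeast_xSep ρ z hx hxn i).1.trans (ncard_le_ncard ?_))
  rintro j ⟨hji, hj⟩
  simpa [hji, add_comm] using hj

lemma card_dist_lt_add_xSep_le (hρ : 0 ≤ ρ) (hx : 1 ≤ x) (hxn : x < n) (i : Fin n) :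
    #{j | dist (z i) (z j) < ρ + xSep ρ z x i} ≤ x := by
  by_contra! hcard
  set A := ({j | dist (z i) (z j) < ρ + xSep ρ z x i} : Finset (Fin n)).erase i
  have hA : x ≤ #A := (Nat.le_sub_one_of_lt hcard).trans Finset.pred_card_le_card_erase
  obtain ⟨j, hj, hmax⟩ := A.exists_max_image (fun j ↦ dist (z i) (z j) - 2 * ρ)
    (Finset.card_pos.1 (hx.trans hA))
  have hle : xSep ρ z x i ≤ dist (z i) (z j) - 2 * ρ := by
    refine (isLeast_xSep ρ z hx hxn i).2 (hA.trans ?_)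
    rw [← ncard_coe_finset]
    exact ncard_le_ncard fun k hk ↦ ⟨Finset.ne_of_mem_erase hk, hmax k hk⟩
  have hlt := (Finset.mem_filter.1 (Finset.mem_of_mem_erase hj)).2
  linarith

lemma xSep_le_xSep_add {w : Fin n → EuclideanSpace ℝ (Fin d)} {ε : ℝ} (hx : 1 ≤ x) (hxn : x < n)
    (hzw : ∀ j, dist (z j) (w j) ≤ ε) (i : Fin n) :
    xSep ρ w x i ≤ xSep ρ z x i + 2 * ε := by
  refine (isLeast_xSep ρ w hx hxn i).2 ((isLeast_xSep ρ z hx hxn i).1.trans (ncard_le_ncard ?_))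
  rintro j ⟨hji, hj⟩
  have := dist_triangle4_left (z i) (z j) (w i) (w j)
  exact ⟨hji, by linarith [hzw i, hzw j]⟩

/-- The `x`-radius `r_i(x, t)` of entity `i` at time `t`, among entities of radius `ρ` that move
along the trajectories `ζ`. -/
noncomputable def xRadius (ρ : ℝ) (ζ : Fin n → ℝ → EuclideanSpace ℝ (Fin d)) (x : ℕ) (i : Fin n)
    (t : ℝ) : ℝ :=
  ρ + xSep ρ (fun j ↦ ζ j t) x i

lemma lipschitzWith_xRadius {ζ : Fin n → ℝ → EuclideanSpace ℝ (Fin d)}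
    (hζ : ∀ i, LipschitzWith 1 (ζ i)) (hx : 1 ≤ x) (hxn : x < n) (i : Fin n) :
    LipschitzWith 2 (xRadius ρ ζ x i) := by
  refine LipschitzWith.of_le_add_mul 2 fun s t ↦ ?_
  have hmove : ∀ j, dist (ζ j t) (ζ j s) ≤ dist s t := fun j ↦ by
    simpa [dist_comm] using (hζ j).dist_le_mul t s
  simpa [xRadius, add_assoc] using xSep_le_xSep_add hx hxn hmove i

end Separation

section QueryWindow

variable {ι E : Type*} [PseudoMetricSpace E]

/-- The queries in a neighbourhood of entity `i` at time `t`, at the scale `r i t`. A query of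
entity `j` at time `s` is encoded as the pair `(j, s)`; it lies in the window if it is made within
time `α * r i t` after `t` and at distance at most `β * r i t` from `ζ i t`. -/
def queryWindow (ζ : ι → ℝ → E) (r : ι → ℝ → ℝ) (α β : ℝ) (i : ι) (t : ℝ) : Set (ι × ℝ) :=
  {q | q.2 ∈ Ioc t (t + α * r i t) ∧ dist (ζ q.1 q.2) (ζ i t) ≤ β * r i t}

/-- The local scale of a query: the infimum of the radii of all entities, at all times, that have
the query in their window of size `6`, and the junk value `0` if there are none. It is the amount
that the query contributes to each such entity. -/
noncomputable def queryScale (ζ : ι → ℝ → E) (r : ι → ℝ → ℝ) (q : ι × ℝ) : ℝ :=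
  sInf {s | ∃ j u, q ∈ queryWindow ζ r 6 6 j u ∧ r j u = s}

variable {ζ : ι → ℝ → E} {r : ι → ℝ → ℝ} {q : ι × ℝ} {i : ι} {t : ℝ}

lemma queryScale_nonneg (hr : ∀ i t, 0 < r i t) : 0 ≤ queryScale ζ r q := by
  refine Real.sInf_nonneg ?_
  rintro _ ⟨j, u, -, rfl⟩
  exact (hr j u).le

lemma queryScale_le (hr : ∀ i t, 0 < r i t) (hq : q ∈ queryWindow ζ r 6 6 i t) :
    queryScale ζ r q ≤ r i t := by
  refine csInf_le ⟨0, ?_⟩ ⟨i, t, hq, rfl⟩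
  rintro _ ⟨j, u, -, rfl⟩
  exact (hr j u).le

lemma exists_lt_of_queryScale_lt {c : ℝ} (hq : q ∈ queryWindow ζ r 6 6 i t)
    (hc : queryScale ζ r q < c) : ∃ j u, q ∈ queryWindow ζ r 6 6 j u ∧ r j u < c := by
  have hne : {s | ∃ j u, q ∈ queryWindow ζ r 6 6 j u ∧ r j u = s}.Nonempty :=
    ⟨r i t, i, t, hq, rfl⟩
  obtain ⟨_, ⟨j, u, hju, rfl⟩, hlt⟩ := exists_lt_of_csInf_lt hne hc
  exact ⟨j, u, hju, hlt⟩

end QueryWindow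

section ForcedQueries

variable {d n x y : ℕ} {ρ : ℝ}

lemma exists_query_of_notMem_uRegionM {ζ : ℝ → EuclideanSpace ℝ (Fin d)} {Q : Set ℝ}
    {p : EuclideanSpace ℝ (Fin d)} {t t' : ℝ} (hζ : LipschitzWith 1 ζ) (htt' : t ≤ t')
    (hp : dist p (ζ t) ≤ ρ + (t' - t)) (hmem : p ∉ uRegionM ρ ζ Q t') :
    ∃ s ∈ Q, s ∈ Ioc t t' := by
  by_contra! hnone
  have hpast : Q ∩ Iic t' = Q ∩ Iic t := by
    refine Subset.antisymm (fun s hs ↦ ⟨hs.1, ?_⟩) (by gcongr)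
    exact not_lt.1 fun hts ↦ hnone s hs.1 ⟨hts, hs.2⟩
  refine hmem ?_
  rw [uRegionM, hpast]
  split_ifs with hne
  · set s := sSup (Q ∩ Iic t)
    have hst : s ≤ t := csSup_le hne fun s hs ↦ hs.2
    have hmove : dist (ζ t) (ζ s) ≤ t - s := by
      simpa [Real.dist_eq, abs_of_nonneg (sub_nonneg.2 hst)] using hζ.dist_le_mul t s
    exact mem_closedBall.2 (by linarith [dist_triangle p (ζ t) (ζ s)])
  · exact mem_univ p

open scoped Classical in
lemma succ_le_card_queryWindow_add {ζ : Fin n → ℝ → EuclideanSpace ℝ (Fin d)}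
    {Q : Fin n → Set ℝ} {P : Finset (Fin n × ℝ)} {i : Fin n} {t : ℝ} (hρ : 0 ≤ ρ)
    (hζ : ∀ j, LipschitzWith 1 (ζ j)) (hy : 1 ≤ y) (hyn : y < n)
    (hsep : 0 ≤ xSep ρ (fun j ↦ ζ j t) y i)
    (hP : ∀ j, ∀ s ∈ Q j, s ∈ Ioc t (t + xRadius ρ ζ y i t) → (j, s) ∈ P)
    (hply : {j | ζ i t ∈ uRegionM ρ (ζ j) (Q j) (t + xRadius ρ ζ y i t)}.ncard ≤ x) :
    y + 1 ≤ #{q ∈ P | q ∈ queryWindow ζ (xRadius ρ ζ y) 1 3 i t} + x := by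
  set R := xRadius ρ ζ y i t
  set W := ({q ∈ P | q ∈ queryWindow ζ (xRadius ρ ζ y) 1 3 i t} : Finset (Fin n × ℝ))
  set U := ({j | ζ i t ∈ uRegionM ρ (ζ j) (Q j) (t + R)} : Finset (Fin n)) with hU
  set N := ({j | dist (ζ i t) (ζ j t) ≤ 2 * ρ + xSep ρ (fun j ↦ ζ j t) y i} : Finset (Fin n))
  have hρR : ρ + xSep ρ (fun j ↦ ζ j t) y i = R := rfl
  have hN : N ⊆ W.image Prod.fst ∪ U := by
    intro j hj
    have hdist : dist (ζ i t) (ζ j t) ≤ ρ + R := by linarith [(Finset.mem_filter.1 hj).2]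
    refine Finset.mem_union.2 (or_iff_not_imp_right.2 fun hjU ↦ ?_)
    have hout : ζ i t ∉ uRegionM ρ (ζ j) (Q j) (t + R) := by simpa [hU] using hjU
    obtain ⟨s, hsQ, hs⟩ := exists_query_of_notMem_uRegionM (hζ j) (t := t) (by linarith)
      (by linarith) hout
    have hmove : dist (ζ j s) (ζ j t) ≤ s - t := by
      simpa [Real.dist_eq, abs_of_pos (sub_pos.2 hs.1)] using (hζ j).dist_le_mul s t
    have hclose : dist (ζ j s) (ζ i t) ≤ 3 * R := by
      linarith [hs.2, dist_triangle_right (ζ j s) (ζ i t) (ζ j t)]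
    exact Finset.mem_image.2
      ⟨(j, s), Finset.mem_filter.2 ⟨hP j s hsQ hs, by rwa [one_mul], hclose⟩, rfl⟩
  have hNcard : y + 1 ≤ #N :=
    succ_le_card_dist_le_xSep (z := fun j ↦ ζ j t) hy hyn (by linarith)
  have hUcard : #U ≤ x := by rwa [hU, ← ncard_coe_finset, Finset.coe_filter_univ]
  calc y + 1 ≤ #(W.image Prod.fst ∪ U) := hNcard.trans (Finset.card_le_card hN)
    _ ≤ #(W.image Prod.fst) + #U := Finset.card_union_le _ _
    _ ≤ #W + x := add_le_add Finset.card_image_le hUcard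

end ForcedQueries

section Charging

lemma apply_add_apply_le_of_lipschitzWith {f : ℝ → ℝ} {u : ℝ} (hf : LipschitzWith 2 f)
    (hu : 0 ≤ f u) : f (u + f u) ≤ 3 * f u := by
  have := hf.le_add_mul (u + f u) u
  rw [dist_self_add_left, Real.norm_of_nonneg hu, NNReal.coe_ofNat] at this
  linarith

variable {ι E : Type*} [PseudoMetricSpace E]

open scoped Classical in
/-- A state of the walk through space-time that collects scale mass for entity `i` at time `t`: the
walk has reached entity `j` at time `u` after advancing a total time `S` by steps in which it
collected queries of `P`, and the collected queries lie in the window of `i` at time `t`. -/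
structure ChargingState (ζ : ι → ℝ → E) (r : ι → ℝ → ℝ) (P : Finset (ι × ℝ)) (w : ℝ) (i : ι)
    (t : ℝ) (j : ι) (u S : ℝ) : Prop where
  le_time : t ≤ u
  time_add_le : u - t + 5 * r j u ≤ 11 * S + 5 * r i t
  dist_add_le : dist (ζ j u) (ζ i t) + 5 * r j u ≤ 11 * S + 5 * r i t
  mass_le : w / 65 * S ≤
    ∑ q ∈ P with q ∈ queryWindow ζ r 6 6 i t ∧ q.2 ≤ u, queryScale ζ r q

namespace ChargingState

variable {ζ : ι → ℝ → E} {r : ι → ℝ → ℝ} {P : Finset (ι × ℝ)} {w : ℝ} {i j : ι} {t u S : ℝ}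

lemma initial (hr : ∀ i t, 0 < r i t) : ChargingState ζ r P w i t i t 0 where
  le_time := le_rfl
  time_add_le := by simp
  dist_add_le := by simp
  mass_le := by simpa using Finset.sum_nonneg fun q _ ↦ queryScale_nonneg hr

lemma mem_queryWindow {q : ι × ℝ} (h : ChargingState ζ r P w i t j u S)
    (hr : ∀ i t, 0 < r i t) (hS : 11 * S < r i t) (hq : q ∈ queryWindow ζ r 1 3 j u) :
    q ∈ queryWindow ζ r 6 6 i t := by
  obtain ⟨⟨huq, hqu⟩, hdist⟩ := hq
  refine ⟨⟨h.le_time.trans_lt huq, ?_⟩, ?_⟩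
  · linarith [h.time_add_le, hr j u]
  · linarith [h.dist_add_le, hr j u, dist_triangle (ζ q.1 q.2) (ζ j u) (ζ i t)]

open scoped Classical in
lemma add_mass_le (h : ChargingState ζ r P w i t j u S) (hr : ∀ i t, 0 < r i t)
    (hS : 11 * S < r i t) (hw : w ≤ #{q ∈ P | q ∈ queryWindow ζ r 1 3 j u})
    (hscale : ∀ q ∈ queryWindow ζ r 1 3 j u, r j u / 65 ≤ queryScale ζ r q) :
    w / 65 * (S + r j u) ≤
      ∑ q ∈ P with q ∈ queryWindow ζ r 6 6 i t ∧ q.2 ≤ u + r j u, queryScale ζ r q := by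
  set W := ({q ∈ P | q ∈ queryWindow ζ r 1 3 j u} : Finset (ι × ℝ)) with hW
  set V := ({q ∈ P | q ∈ queryWindow ζ r 6 6 i t ∧ q.2 ≤ u} : Finset (ι × ℝ)) with hV
  have hnew : w * (r j u / 65) ≤ ∑ q ∈ W, queryScale ζ r q := by
    calc w * (r j u / 65) ≤ #W * (r j u / 65) := by gcongr; linarith [hr j u]
      _ = #W • (r j u / 65) := (nsmul_eq_mul _ _).symm
      _ ≤ ∑ q ∈ W, queryScale ζ r q :=
        Finset.card_nsmul_le_sum _ _ _ fun q hq ↦ hscale q (Finset.mem_filter.1 hq).2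
  have hdisj : Disjoint V W := Finset.disjoint_filter.2 fun q _ hqV hqW ↦
    hqW.1.1.not_ge hqV.2
  calc w / 65 * (S + r j u) = w / 65 * S + w * (r j u / 65) := by ring
    _ ≤ ∑ q ∈ V, queryScale ζ r q + ∑ q ∈ W, queryScale ζ r q := add_le_add h.mass_le hnew
    _ = ∑ q ∈ V ∪ W, queryScale ζ r q := (Finset.sum_union hdisj).symm
    _ ≤ _ := by
      refine Finset.sum_le_sum_of_subset_of_nonneg ?_ fun _ _ _ ↦ queryScale_nonneg hr
      rw [hV, hW, ← Finset.filter_or]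
      refine Finset.monotone_filter_right P ?_
      rintro q - (⟨hq, hqu⟩ | hq)
      · exact ⟨hq, by linarith [hr j u]⟩
      · exact ⟨h.mem_queryWindow hr hS hq, by linarith [hq.1.2]⟩

open scoped Classical in
lemma advance (h : ChargingState ζ r P w i t j u S) (hr : ∀ i t, 0 < r i t)
    (hζ : ∀ i, LipschitzWith 1 (ζ i)) (hlip : ∀ i, LipschitzWith 2 (r i))
    (hS : 11 * S < r i t) (hw : w ≤ #{q ∈ P | q ∈ queryWindow ζ r 1 3 j u})
    (hscale : ∀ q ∈ queryWindow ζ r 1 3 j u, r j u / 65 ≤ queryScale ζ r q) :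
    ChargingState ζ r P w i t j (u + r j u) (S + r j u) := by
  have hgrow := apply_add_apply_le_of_lipschitzWith (hlip j) (hr j u).le
  have hmove : dist (ζ j (u + r j u)) (ζ j u) ≤ r j u := by
    simpa [abs_of_pos (hr j u)] using (hζ j).dist_le_mul (u + r j u) u
  exact
    { le_time := by linarith [h.le_time, hr j u]
      time_add_le := by linarith [h.time_add_le]
      dist_add_le := by
        linarith [h.dist_add_le, dist_triangle (ζ j (u + r j u)) (ζ j u) (ζ i t)]
      mass_le := h.add_mass_le hr hS hw hscale }

lemma descend {q : ι × ℝ} {k : ι} {v : ℝ} (h : ChargingState ζ r P w i t j u S)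
    (hr : ∀ i t, 0 < r i t) (hζ : ∀ i, LipschitzWith 1 (ζ i)) (hlip : ∀ i, LipschitzWith 2 (r i))
    (hqj : q ∈ queryWindow ζ r 1 3 j u) (hqk : q ∈ queryWindow ζ r 6 6 k v)
    (hlt : r k v < r j u / 65) :
    r k (max v u) ≤ r j u / 5 ∧ ChargingState ζ r P w i t k (max v u) S := by
  classical
  obtain ⟨⟨huq, hqu⟩, hdistj⟩ := hqj
  obtain ⟨⟨hvq, hqv⟩, hdistk⟩ := hqk
  have hwait : |max v u - v| ≤ 6 * r k v := by
    rw [abs_of_nonneg (sub_nonneg.2 (le_max_left v u)), sub_le_iff_le_add']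
    exact max_le (by linarith [hr k v]) (by linarith)
  have hsmall : r k (max v u) ≤ r j u / 5 := by
    have := (hlip k).le_add_mul (max v u) v
    rw [Real.dist_eq, NNReal.coe_ofNat] at this
    linarith
  have htime : max v u ≤ u + r j u := max_le (by linarith) (by linarith [hr j u])
  have hmove : dist (ζ k (max v u)) (ζ k v) ≤ 6 * r k v := by
    refine ((hζ k).dist_le_mul (max v u) v).trans ?_
    rwa [NNReal.coe_one, one_mul, Real.dist_eq]
  have hdist : dist (ζ k (max v u)) (ζ j u) ≤ 12 * r k v + 3 * r j u := by
    have := dist_triangle4 (ζ k (max v u)) (ζ k v) (ζ q.1 q.2) (ζ j u)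
    rw [dist_comm (ζ k v)] at this
    linarith
  refine ⟨hsmall, h.le_time.trans (le_max_right v u), ?_, ?_, h.mass_le.trans ?_⟩
  · linarith [h.time_add_le]
  · linarith [h.dist_add_le, dist_triangle (ζ k (max v u)) (ζ j u) (ζ i t)]
  · refine Finset.sum_le_sum_of_subset_of_nonneg ?_ fun _ _ _ ↦ queryScale_nonneg hr
    exact Finset.monotone_filter_right P fun _ _ hq ↦ ⟨hq.1, hq.2.trans (le_max_right v u)⟩

open scoped Classical in
/-- Either all queries near the current position have a scale comparable to the current radius and
are collected, or one of them points to an entity of much smaller radius, to which the walk jumps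
without advancing. The factor `65 = 13 * 5` arises since the time `6 * r` that may pass before the
jump can enlarge the radius `r` of that entity `13`-fold, and it must still end up below a fifth of
the current radius. -/
lemma exists_step (h : ChargingState ζ r P w i t j u S) (hr : ∀ i t, 0 < r i t)
    (hζ : ∀ i, LipschitzWith 1 (ζ i)) (hlip : ∀ i, LipschitzWith 2 (r i))
    (hS : 11 * S < r i t) (hw : w ≤ #{q ∈ P | q ∈ queryWindow ζ r 1 3 j u}) :
    ∃ j' u' S', ChargingState ζ r P w i t j' u' S' ∧
      r j' u' - 3 * S' ≤ r j u - 3 * S - r j u / 2 := by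
  by_cases hscale : ∀ q ∈ queryWindow ζ r 1 3 j u, r j u / 65 ≤ queryScale ζ r q
  · refine ⟨j, u + r j u, S + r j u, h.advance hr hζ hlip hS hw hscale, ?_⟩
    linarith [apply_add_apply_le_of_lipschitzWith (hlip j) (hr j u).le, hr j u]
  · push Not at hscale
    obtain ⟨q, hq, hqlt⟩ := hscale
    obtain ⟨k, v, hqk, hlt⟩ := exists_lt_of_queryScale_lt (h.mem_queryWindow hr hS hq) hqlt
    obtain ⟨hsmall, hstate⟩ := h.descend hr hζ hlip hq hqk hlt
    exact ⟨k, max v u, S, hstate, by linarith [hr j u]⟩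

open scoped Classical in
lemma exists_final {a e m : ℝ} (hr : ∀ i t, 0 < r i t) (hζ : ∀ i, LipschitzWith 1 (ζ i))
    (hlip : ∀ i, LipschitzWith 2 (r i)) (hm : 0 < m) (hmr : ∀ i, ∀ t ∈ Icc a e, m ≤ r i t)
    (hforce : ∀ i t, a ≤ t → t + r i t ≤ e → w ≤ #{q ∈ P | q ∈ queryWindow ζ r 1 3 i t})
    (hat : a ≤ t) (hte : t + 6 * r i t ≤ e) :
    ∃ j u S, ChargingState ζ r P w i t j u S ∧ r i t ≤ 11 * S := by
  by_contra! hnot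
  have hwalk (k : ℕ) : ∃ j u S, ChargingState ζ r P w i t j u S ∧
      r j u - 3 * S ≤ r i t - k * (m / 2) := by
    induction k with
    | zero => exact ⟨i, t, 0, initial hr, by simp⟩
    | succ k ih =>
      obtain ⟨j, u, S, hstate, hpot⟩ := ih
      have hS : 11 * S < r i t := hnot j u S hstate
      have hend : u + r j u ≤ e := by linarith [hstate.time_add_le, hr j u]
      have hau : a ≤ u := hat.trans hstate.le_time
      obtain ⟨j', u', S', hstate', hdrop⟩ :=
        hstate.exists_step hr hζ hlip hS (hforce j u hau hend)
      have hmru : m ≤ r j u := hmr j u ⟨hau, by linarith [hr j u]⟩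
      exact ⟨j', u', S', hstate', by push_cast; linarith⟩
  obtain ⟨k, hk⟩ := exists_nat_ge (2 * r i t / (m / 2))
  rw [div_le_iff₀ (by positivity)] at hk
  obtain ⟨j, u, S, hstate, hpot⟩ := hwalk k
  linarith [hnot j u S hstate, hr j u, hr i t]

end ChargingState

open scoped Classical in
lemma mul_radius_le_sum_queryScale {ζ : ι → ℝ → E} {r : ι → ℝ → ℝ} {P : Finset (ι × ℝ)} {i : ι}
    {w t a e m : ℝ} (hr : ∀ i t, 0 < r i t) (hζ : ∀ i, LipschitzWith 1 (ζ i))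
    (hlip : ∀ i, LipschitzWith 2 (r i)) (hm : 0 < m) (hmr : ∀ i, ∀ t ∈ Icc a e, m ≤ r i t)
    (hw : 0 ≤ w)
    (hforce : ∀ i t, a ≤ t → t + r i t ≤ e → w ≤ #{q ∈ P | q ∈ queryWindow ζ r 1 3 i t})
    (hat : a ≤ t) (hte : t + 6 * r i t ≤ e) :
    w / 715 * r i t ≤ ∑ q ∈ P with q ∈ queryWindow ζ r 6 6 i t, queryScale ζ r q := by
  obtain ⟨j, u, S, hstate, hS⟩ :=
    ChargingState.exists_final hr hζ hlip hm hmr hforce hat hte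
  calc w / 715 * r i t ≤ w / 715 * (11 * S) := by gcongr
    _ = w / 65 * S := by ring
    _ ≤ _ := hstate.mass_le
    _ ≤ _ := Finset.sum_le_sum_of_subset_of_nonneg
      (Finset.monotone_filter_right P fun _ _ hq ↦ hq.1) fun _ _ _ ↦ queryScale_nonneg hr

lemma exists_pos_forall_le_of_continuous {ι X : Type*} [Finite ι] [TopologicalSpace X]
    {r : ι → X → ℝ} {s : Set X} (hs : IsCompact s) (hrc : ∀ i, Continuous (r i))
    (hr : ∀ i t, 0 < r i t) : ∃ m > 0, ∀ i, ∀ t ∈ s, m ≤ r i t := by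
  have hbound (i : ι) : ∀ᶠ m in 𝓝[>] (0 : ℝ), ∀ t ∈ s, m ≤ r i t := by
    obtain ⟨c, hc, hle⟩ := hs.exists_forall_le' (hrc i).continuousOn fun t _ ↦ hr i t
    filter_upwards [Ioc_mem_nhdsGT hc] with m hm t ht using hm.2.trans (hle t ht)
  obtain ⟨m, hle, hm⟩ := ((Filter.eventually_all.2 hbound).and self_mem_nhdsWithin).exists
  exact ⟨m, hm, hle⟩

end Charging

section Integrals

lemma integral_one_div_const_sub {a b c : ℝ} (hab : a ≤ b) (hbc : b < c) :
    ∫ t in a..b, 1 / (c - t) = Real.log ((c - a) / (c - b)) := by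
  rw [intervalIntegral.integral_comp_sub_left (fun t ↦ 1 / t),
    integral_one_div_of_pos (by linarith) (by linarith)]

lemma integral_one_div_sq_add_sq_le {κ l : ℝ} (hκ : 0 < κ) (hl : 0 < l) (a b s : ℝ) :
    ∫ t in a..b, 1 / (l ^ 2 + ((s - t) / κ) ^ 2) ≤ κ * Real.pi / l := by
  have hrescale (t : ℝ) : 1 / (l ^ 2 + ((s - t) / κ) ^ 2) =
      (l ^ 2)⁻¹ * (1 + (s / (κ * l) - t / (κ * l)) ^ 2)⁻¹ := by
    rw [← sub_div]
    field_simp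
  simp only [hrescale]
  rw [intervalIntegral.integral_const_mul,
    intervalIntegral.integral_comp_sub_div (fun t ↦ (1 + t ^ 2)⁻¹) (by positivity),
    integral_inv_one_add_sq, smul_eq_mul]
  set A := Real.arctan (s / (κ * l) - a / (κ * l))
  set B := Real.arctan (s / (κ * l) - b / (κ * l))
  have hAB : A - B ≤ Real.pi := by
    linarith [Real.arctan_lt_pi_div_two (s / (κ * l) - a / (κ * l)),
      Real.neg_pi_div_two_lt_arctan (s / (κ * l) - b / (κ * l))]
  calc (l ^ 2)⁻¹ * (κ * l * (A - B)) = κ * (A - B) / l := by field_simp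
    _ ≤ κ * Real.pi / l := by gcongr

lemma one_div_max_abs_sq_le {l : ℝ} (hl : 0 < l) (τ : ℝ) :
    1 / max l |τ| ^ 2 ≤ 2 * (1 / (l ^ 2 + τ ^ 2)) := by
  rw [mul_one_div, div_le_div_iff₀ (by positivity) (by positivity), one_mul, two_mul]
  rw [← sq_abs τ]
  gcongr
  · exact le_max_left _ _
  · exact le_max_right _ _

end Integrals

section QueryCharge

variable {ι E : Type*}

/-- The amount that the query `q` pays towards `1 / r i t`, as a function of the time `t`. -/
noncomputable def queryCharge [PseudoMetricSpace E] (ζ : ι → ℝ → E) (r : ι → ℝ → ℝ) (q : ι × ℝ)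
    (i : ι) : ℝ → ℝ :=
  {t | q ∈ queryWindow ζ r 6 6 i t}.indicator fun t ↦ queryScale ζ r q / r i t ^ 2

section PseudoMetricSpace

variable [PseudoMetricSpace E] {ζ : ι → ℝ → E} {r : ι → ℝ → ℝ} {q : ι × ℝ} {i : ι} {t : ℝ}

lemma queryCharge_nonneg (hr : ∀ i t, 0 < r i t) : 0 ≤ queryCharge ζ r q i t :=
  indicator_nonneg (fun _ _ ↦ div_nonneg (queryScale_nonneg hr) (sq_nonneg _)) t

lemma measurableSet_mem_queryWindow {α β : ℝ} (hζ : Continuous (ζ i)) (hr : Continuous (r i)) :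
    MeasurableSet {t | q ∈ queryWindow ζ r α β i t} := by
  have hafter : MeasurableSet {t | t < q.2} := measurableSet_Iio
  have hbefore : MeasurableSet {t | q.2 ≤ t + α * r i t} :=
    (isClosed_le (by fun_prop) (by fun_prop)).measurableSet
  have hnear : MeasurableSet {t | dist (ζ q.1 q.2) (ζ i t) ≤ β * r i t} :=
    (isClosed_le (by fun_prop) (by fun_prop)).measurableSet
  exact (hafter.inter hbefore).inter hnear

lemma intervalIntegrable_queryCharge (hr : ∀ i t, 0 < r i t) (hζ : ∀ i, Continuous (ζ i))
    (hrc : ∀ i, Continuous (r i)) (q : ι × ℝ) (i : ι) (a b : ℝ) :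
    IntervalIntegrable (queryCharge ζ r q i) volume a b := by
  have hcont : Continuous fun t ↦ queryScale ζ r q / r i t ^ 2 :=
    continuous_const.div ((hrc i).pow 2) fun t ↦ (pow_pos (hr i t) 2).ne'
  rw [intervalIntegrable_iff]
  exact (intervalIntegrable_iff.1 (hcont.intervalIntegrable a b)).indicator
    (measurableSet_mem_queryWindow (hζ i) (hrc i))

variable {P : Finset (ι × ℝ)} {w a b e : ℝ}

open scoped Classical in
lemma one_div_radius_le_sum_queryCharge (hw : 0 < w) (hr : ∀ i t, 0 < r i t)
    (hmass : w / 715 * r i t ≤ ∑ q ∈ P with q ∈ queryWindow ζ r 6 6 i t, queryScale ζ r q) :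
    1 / r i t ≤ 715 / w * ∑ q ∈ P, queryCharge ζ r q i t := by
  have hrt := hr i t
  have hsum : ∑ q ∈ P, queryCharge ζ r q i t =
      (∑ q ∈ P with q ∈ queryWindow ζ r 6 6 i t, queryScale ζ r q) / r i t ^ 2 := by
    rw [Finset.sum_div, Finset.sum_filter]
    rfl
  calc 1 / r i t = 715 / w * (w / 715 * r i t / r i t ^ 2) := by field_simp
    _ ≤ 715 / w * ∑ q ∈ P, queryCharge ζ r q i t := by rw [hsum]; gcongr

open scoped Classical in
lemma one_div_radius_le_add_sum_queryCharge {m : ℝ} (hr : ∀ i t, 0 < r i t)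
    (hζ : ∀ i, LipschitzWith 1 (ζ i)) (hlip : ∀ i, LipschitzWith 2 (r i)) (hm : 0 < m)
    (hmr : ∀ i, ∀ t ∈ Icc a e, m ≤ r i t) (hw : 0 < w)
    (hforce : ∀ i t, a ≤ t → t + r i t ≤ e → w ≤ #{q ∈ P | q ∈ queryWindow ζ r 1 3 i t})
    (i : ι) (ht : t ∈ Ico a e) :
    1 / r i t ≤ 6 * (1 / (e - t)) + 715 / w * ∑ q ∈ P, queryCharge ζ r q i t := by
  have het : 0 < e - t := sub_pos.2 ht.2
  have hnonneg : 0 ≤ ∑ q ∈ P, queryCharge ζ r q i t :=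
    Finset.sum_nonneg fun _ _ ↦ queryCharge_nonneg hr
  rcases le_or_gt (t + 6 * r i t) e with hte | hte
  · exact (one_div_radius_le_sum_queryCharge hw hr
      (mul_radius_le_sum_queryScale hr hζ hlip hm hmr hw.le hforce ht.1 hte)).trans
      (le_add_of_nonneg_left (by positivity))
  · refine le_trans ?_ (le_add_of_nonneg_right (by positivity))
    rw [mul_one_div, div_le_div_iff₀ (hr i t) het]
    linarith

open scoped Classical in
lemma integral_one_div_radius_le [Finite ι] (hab : a ≤ b) (hbe : b < e) (hr : ∀ i t, 0 < r i t)
    (hζ : ∀ i, LipschitzWith 1 (ζ i)) (hlip : ∀ i, LipschitzWith 2 (r i)) (hw : 0 < w)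
    (hforce : ∀ i t, a ≤ t → t + r i t ≤ e → w ≤ #{q ∈ P | q ∈ queryWindow ζ r 1 3 i t})
    (i : ι) :
    ∫ t in a..b, 1 / r i t ≤ 6 * Real.log ((e - a) / (e - b)) +
      715 / w * ∑ q ∈ P, ∫ t in a..b, queryCharge ζ r q i t := by
  have hrc (i : ι) : Continuous (r i) := (hlip i).continuous
  obtain ⟨m, hm, hmr⟩ := exists_pos_forall_le_of_continuous (isCompact_Icc (a := a) (b := e)) hrc hr
  have hradius : IntervalIntegrable (fun t ↦ 1 / r i t) volume a b :=
    (continuous_const.div (hrc i) fun t ↦ (hr i t).ne').intervalIntegrable a b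
  have hboundary : IntervalIntegrable (fun t ↦ 6 * (1 / (e - t))) volume a b := by
    refine ContinuousOn.intervalIntegrable fun t ht ↦ ?_
    rw [uIcc_of_le hab] at ht
    have het : e - t ≠ 0 := by linarith [ht.2]
    exact (continuousAt_const.mul
      (continuousAt_const.div (by fun_prop) het)).continuousWithinAt
  have hcharge (q : ι × ℝ) : IntervalIntegrable (queryCharge ζ r q i) volume a b :=
    intervalIntegrable_queryCharge hr (fun i ↦ (hζ i).continuous) hrc q i a b
  have hpaid :
      IntervalIntegrable (fun t ↦ 715 / w * ∑ q ∈ P, queryCharge ζ r q i t) volume a b := by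
    refine IntervalIntegrable.const_mul ?_ _
    simpa only [Finset.sum_fn] using IntervalIntegrable.sum P fun q _ ↦ hcharge q
  calc ∫ t in a..b, 1 / r i t
      ≤ ∫ t in a..b, (6 * (1 / (e - t)) + 715 / w * ∑ q ∈ P, queryCharge ζ r q i t) :=
        intervalIntegral.integral_mono_on hab hradius (hboundary.add hpaid) fun t ht ↦
          one_div_radius_le_add_sum_queryCharge hr hζ hlip hm hmr hw hforce i
            ⟨ht.1, ht.2.trans_lt hbe⟩
    _ = _ := by
      rw [intervalIntegral.integral_add hboundary hpaid, intervalIntegral.integral_const_mul,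
        intervalIntegral.integral_const_mul, integral_one_div_const_sub hab hbe,
        intervalIntegral.integral_finsetSum fun q _ ↦ hcharge q]

end PseudoMetricSpace

section NormedSpace

variable [Fintype ι] [NormedAddCommGroup E] [NormedSpace ℝ E] {ζ : ι → ℝ → E} {r : ι → ℝ → ℝ}
  {F : Finset E} {y : ℕ}

open scoped Classical in
lemma sum_queryCharge_le (hr : ∀ i t, 0 < r i t)
    (hF : IsCover (1 / 3) (closedBall (0 : E) (2 * 6)) (F : Set E))
    (hpack : ∀ t i, #{j | dist (ζ i t) (ζ j t) < r i t} ≤ y) {q : ι × ℝ}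
    (hl : 0 < queryScale ζ r q) (t : ℝ) :
    ∑ i, queryCharge ζ r q i t ≤ queryScale ζ r q * (8 / 3 * (y * #F)) *
      (1 / (queryScale ζ r q ^ 2 + ((q.2 - t) / 6) ^ 2)) := by
  set l := queryScale ζ r q
  set τ := (q.2 - t) / 6 with hτ
  set I := ({i | q ∈ queryWindow ζ r 6 6 i t} : Finset ι) with hI
  have hradius : ∀ i ∈ I, max l |τ| ≤ r i t := by
    intro i hi
    have hmem : q ∈ queryWindow ζ r 6 6 i t := (Finset.mem_filter.1 hi).2
    refine max_le (queryScale_le hr hmem) ?_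
    rw [abs_of_pos (by linarith [hmem.1.1])]
    linarith [hmem.1.2]
  have hsum : ∑ i, queryCharge ζ r q i t = l * ∑ i ∈ I, 1 / r i t ^ 2 := by
    rw [Finset.mul_sum, hI, Finset.sum_filter]
    simp only [mul_one_div]
    rfl
  have hstatic : ∑ i ∈ I, 1 / r i t ^ 2 ≤ 4 / 3 * (y * #F) / max l |τ| ^ 2 :=
    sum_one_div_sq_le_of_isCover (by norm_num) hF (hpack t) (ζ q.1 q.2)
      (hl.trans_le (le_max_left _ _)) (fun i hi ↦ (Finset.mem_filter.1 hi).2.2) hradius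
  calc ∑ i, queryCharge ζ r q i t
      ≤ l * (4 / 3 * (y * #F) / max l |τ| ^ 2) := by rw [hsum]; gcongr
    _ = l * (4 / 3 * (y * #F)) * (1 / max l |τ| ^ 2) := by ring
    _ ≤ l * (4 / 3 * (y * #F)) * (2 * (1 / (l ^ 2 + τ ^ 2))) := by
      gcongr
      exact one_div_max_abs_sq_le hl τ
    _ = l * (8 / 3 * (y * #F)) * (1 / (l ^ 2 + τ ^ 2)) := by ring

lemma sum_integral_queryCharge_le {a b : ℝ} (hab : a ≤ b) (hr : ∀ i t, 0 < r i t)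
    (hζ : ∀ i, Continuous (ζ i)) (hrc : ∀ i, Continuous (r i))
    (hF : IsCover (1 / 3) (closedBall (0 : E) (2 * 6)) (F : Set E))
    (hpack : ∀ t i, #{j | dist (ζ i t) (ζ j t) < r i t} ≤ y) (q : ι × ℝ) :
    ∑ i, ∫ t in a..b, queryCharge ζ r q i t ≤ 16 * Real.pi * (y * #F) := by
  have hcharge (i : ι) : IntervalIntegrable (queryCharge ζ r q i) volume a b :=
    intervalIntegrable_queryCharge hr hζ hrc q i a b
  rcases (queryScale_nonneg (ζ := ζ) (q := q) hr).eq_or_lt with hl | hl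
  · have hzero (i : ι) : queryCharge ζ r q i = 0 := by
      ext t
      simp [queryCharge, ← hl]
    simp only [hzero, Pi.zero_apply, intervalIntegral.integral_zero, Finset.sum_const_zero]
    positivity
  have hsum : IntervalIntegrable (fun t ↦ ∑ i, queryCharge ζ r q i t) volume a b := by
    simpa only [Finset.sum_fn] using IntervalIntegrable.sum Finset.univ fun i _ ↦ hcharge i
  rw [← intervalIntegral.integral_finsetSum fun i _ ↦ hcharge i]
  set l := queryScale ζ r q
  have hlorentz : Continuous fun t ↦ 1 / (l ^ 2 + ((q.2 - t) / 6) ^ 2) :=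
    continuous_const.div (by fun_prop) fun t ↦ by positivity
  calc ∫ t in a..b, ∑ i, queryCharge ζ r q i t
      ≤ ∫ t in a..b, l * (8 / 3 * (y * #F)) * (1 / (l ^ 2 + ((q.2 - t) / 6) ^ 2)) :=
        intervalIntegral.integral_mono_on hab hsum
          ((hlorentz.intervalIntegrable a b).const_mul _)
          fun t _ ↦ sum_queryCharge_le hr hF hpack hl t
    _ ≤ l * (8 / 3 * (y * #F)) * (6 * Real.pi / l) := by
      rw [intervalIntegral.integral_const_mul]
      gcongr
      exact integral_one_div_sq_add_sq_le (by norm_num) hl a b q.2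
    _ = 16 * Real.pi * (y * #F) := by field_simp; ring

open scoped Classical in
lemma sum_integral_one_div_radius_le {P : Finset (ι × ℝ)} {w a b e : ℝ} (hab : a ≤ b)
    (hbe : b < e) (hr : ∀ i t, 0 < r i t) (hζ : ∀ i, LipschitzWith 1 (ζ i))
    (hlip : ∀ i, LipschitzWith 2 (r i)) (hw : 0 < w)
    (hforce : ∀ i t, a ≤ t → t + r i t ≤ e → w ≤ #{q ∈ P | q ∈ queryWindow ζ r 1 3 i t})
    (hF : IsCover (1 / 3) (closedBall (0 : E) (2 * 6)) (F : Set E))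
    (hpack : ∀ t i, #{j | dist (ζ i t) (ζ j t) < r i t} ≤ y) :
    ∑ i, ∫ t in a..b, 1 / r i t ≤ 6 * Fintype.card ι * Real.log ((e - a) / (e - b)) +
      715 / w * (#P * (16 * Real.pi * (y * #F))) := by
  calc ∑ i, ∫ t in a..b, 1 / r i t
      ≤ ∑ i, (6 * Real.log ((e - a) / (e - b)) +
          715 / w * ∑ q ∈ P, ∫ t in a..b, queryCharge ζ r q i t) :=
        Finset.sum_le_sum fun i _ ↦ integral_one_div_radius_le hab hbe hr hζ hlip hw hforce i
    _ = 6 * Fintype.card ι * Real.log ((e - a) / (e - b)) +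
          715 / w * ∑ q ∈ P, ∑ i, ∫ t in a..b, queryCharge ζ r q i t := by
      rw [Finset.sum_add_distrib, Finset.sum_const, Finset.card_univ, nsmul_eq_mul,
        ← Finset.mul_sum, Finset.sum_comm]
      ring
    _ ≤ _ := by
      gcongr
      rw [← nsmul_eq_mul]
      exact Finset.sum_le_card_nsmul _ _ _ fun q _ ↦ sum_integral_queryCharge_le hab hr
        (fun i ↦ (hζ i).continuous) (fun i ↦ (hlip i).continuous) hF hpack q

end NormedSpace

end QueryCharge

section Counting

lemma exists_finset_card_eq_sum_encard {ι α : Type*} [Fintype ι] {S : ι → Set α}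
    (hS : ∀ i, (S i).Finite) :
    ∃ P : Finset (ι × α), (∀ q, q ∈ P ↔ q.2 ∈ S q.1) ∧
      (#P : ℝ≥0∞) = ∑ i, ((S i).encard : ℝ≥0∞) := by
  refine ⟨(Finset.univ.sigma fun i ↦ (hS i).toFinset).map
    (Equiv.sigmaEquivProd ι α).toEmbedding, fun q ↦ by simp, ?_⟩
  rw [Finset.card_map, Finset.card_sigma, Nat.cast_sum]
  refine Finset.sum_congr rfl fun i _ ↦ ?_
  rw [(hS i).encard_eq_coe_toFinset_card, ENat.toENNReal_coe]

lemma sum_encard_inter_union_le {ι α : Type*} [Fintype ι] (S : ι → Set α) (A B : Set α) :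
    ∑ i, ((S i ∩ (A ∪ B)).encard : ℝ≥0∞) ≤
      ∑ i, ((S i ∩ A).encard : ℝ≥0∞) + ∑ i, ((S i ∩ B).encard : ℝ≥0∞) := by
  rw [← Finset.sum_add_distrib]
  refine Finset.sum_le_sum fun i _ ↦ ?_
  rw [inter_union_distrib_left, ← ENat.toENNReal_add, ENat.toENNReal_le]
  exact encard_union_le _ _

variable {d n x y : ℕ} {ρ : ℝ} {ζ : Fin n → ℝ → EuclideanSpace ℝ (Fin d)} {Q : Fin n → Set ℝ}
  {a b e : ℝ} {F : Finset (EuclideanSpace ℝ (Fin d))}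

lemma sum_integral_one_div_xRadius_le {P : Finset (Fin n × ℝ)}
    (hF : IsCover (1 / 3) (closedBall (0 : EuclideanSpace ℝ (Fin d)) (2 * 6)) (F : Set _))
    (hρ : 0 ≤ ρ) (hζ : ∀ i, LipschitzWith 1 (ζ i)) (hy : 1 ≤ y) (hxy : x ≤ y) (hyn : y < n)
    (hsep : ∀ i t, 0 < xSep ρ (fun j ↦ ζ j t) y i) (hab : a ≤ b) (hbe : b < e)
    (hP : ∀ q, q ∈ P ↔ q.2 ∈ Q q.1 ∩ Icc a e)
    (hply : ∀ t ∈ Icc a e, ∀ q, {i | q ∈ uRegionM ρ (ζ i) (Q i) t}.ncard ≤ x) :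
    ∑ i, ∫ t in a..b, 1 / xRadius ρ ζ y i t ≤ 6 * n * Real.log ((e - a) / (e - b)) +
      715 / (y - x + 1) * (#P * (16 * Real.pi * (y * #F))) := by
  classical
  have hr : ∀ i t, 0 < xRadius ρ ζ y i t := fun i t ↦ add_pos_of_nonneg_of_pos hρ (hsep i t)
  have hw : (0 : ℝ) < y - x + 1 := by linarith [show (x : ℝ) ≤ y by exact_mod_cast hxy]
  have hforce : ∀ i t, a ≤ t → t + xRadius ρ ζ y i t ≤ e →
      (y - x + 1 : ℝ) ≤ #{q ∈ P | q ∈ queryWindow ζ (xRadius ρ ζ y) 1 3 i t} := by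
    intro i t hat hte
    have hforced := succ_le_card_queryWindow_add hρ hζ hy hyn (hsep i t).le
      (fun j s hsQ hs ↦ (hP (j, s)).2 ⟨hsQ, hat.trans hs.1.le, hs.2.trans hte⟩)
      (hply _ ⟨by linarith [hr i t], hte⟩ (ζ i t))
    have : (y + 1 : ℝ) ≤ #{q ∈ P | q ∈ queryWindow ζ (xRadius ρ ζ y) 1 3 i t} + x := by
      exact_mod_cast hforced
    linarith
  simpa only [Fintype.card_fin] using sum_integral_one_div_radius_le hab hbe hr hζ
    (lipschitzWith_xRadius hζ hy hyn) hw hforce hF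
    fun t i ↦ card_dist_lt_add_xSep_le (z := fun j ↦ ζ j t) hρ hy hyn i

lemma ofReal_mul_sum_integral_le_sum_encard
    (hF : IsCover (1 / 3) (closedBall (0 : EuclideanSpace ℝ (Fin d)) (2 * 6)) (F : Set _))
    (hρ : 0 ≤ ρ) (hζ : ∀ i, LipschitzWith 1 (ζ i)) (hy : 1 ≤ y) (hxy : x ≤ y) (hyn : y < n)
    (hsep : ∀ i t, 0 < xSep ρ (fun j ↦ ζ j t) y i) (hab : a ≤ b) (hbe : b < e)
    (hlong : 12 * n * Real.log ((e - a) / (e - b)) ≤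
      ∑ i, ∫ t in a..b, 1 / xRadius ρ ζ y i t)
    (hply : ∀ t ∈ Icc a e, ∀ q, {i | q ∈ uRegionM ρ (ζ i) (Q i) t}.ncard ≤ x) :
    ENNReal.ofReal ((y - x + 1) / (22880 * Real.pi * #F * y) *
        ∑ i, ∫ t in a..b, 1 / xRadius ρ ζ y i t) ≤
      ∑ i, ((Q i ∩ Icc a e).encard : ℝ≥0∞) := by
  by_cases hfin : ∀ i, (Q i ∩ Icc a e).Finite
  · obtain ⟨P, hP, hcard⟩ := exists_finset_card_eq_sum_encard hfin
    have hbound := sum_integral_one_div_xRadius_le hF hρ hζ hy hxy hyn hsep hab hbe hP hply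
    rw [← hcard, ← ENNReal.ofReal_natCast]
    refine ENNReal.ofReal_le_ofReal ?_
    set H := ∑ i, ∫ t in a..b, 1 / xRadius ρ ζ y i t
    have hw : (0 : ℝ) < y - x + 1 := by linarith [show (x : ℝ) ≤ y by exact_mod_cast hxy]
    have hFpos : 0 < #F := Finset.card_pos.2 (by simpa using hF.nonempty (by simp))
    have hH : H ≤ 2 * (715 / (y - x + 1) * (#P * (16 * Real.pi * (y * #F)))) := by linarith
    calc (y - x + 1) / (22880 * Real.pi * #F * y) * H
        ≤ (y - x + 1) / (22880 * Real.pi * #F * y) *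
            (2 * (715 / (y - x + 1) * (#P * (16 * Real.pi * (y * #F))))) := by gcongr
      _ = #P := by field_simp; ring
  · push Not at hfin
    obtain ⟨i, hi⟩ := hfin
    have htop : ∑ i, ((Q i ∩ Icc a e).encard : ℝ≥0∞) = ⊤ :=
      ENNReal.sum_eq_top.2 ⟨i, Finset.mem_univ i, by simp [Set.Infinite.encard_eq hi]⟩
    exact htop ▸ le_top

end Counting

theorem stmt12_general (d : ℕ) :
    ∃ K : ℝ, 0 < K ∧
      ∀ (n : ℕ) (ρ : ℝ) (ζ : Fin n → ℝ → EuclideanSpace ℝ (Fin d)) (x y : ℕ) (a b δ : ℝ)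
        (Q : Fin n → Set ℝ),
        0 ≤ ρ → (∀ i, LipschitzWith 1 (ζ i)) → 1 ≤ y → x ≤ y → y < n →
        (∀ i t, 0 < xSep ρ (fun j ↦ ζ j t) y i) → 0 < δ → δ ≤ b - a →
        12 * n * Real.log (1 + (b - a) / δ) ≤ ∑ i, ∫ t in a..b, 1 / xRadius ρ ζ y i t →
        (∀ t ∈ Icc a b ∪ Icc (a + δ) (b + δ), ∀ q : EuclideanSpace ℝ (Fin d),
          {i | q ∈ uRegionM ρ (ζ i) (Q i) t}.ncard ≤ x) →
        ENNReal.ofReal ((y - x + 1) / (K * y) * ∑ i, ∫ t in a..b, 1 / xRadius ρ ζ y i t) ≤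
          ∑ i, ((Q i ∩ Icc a b).encard : ℝ≥0∞) ∨
        ENNReal.ofReal ((y - x + 1) / (K * y) * ∑ i, ∫ t in a..b, 1 / xRadius ρ ζ y i t) ≤
          ∑ i, ((Q i ∩ Icc (a + δ) (b + δ)).encard : ℝ≥0∞) := by
  obtain ⟨F, -, hFfin, hF⟩ := exists_finite_isCover_of_isCompact (ε := 1 / 3) (by norm_num)
    (isCompact_closedBall (0 : EuclideanSpace ℝ (Fin d)) (2 * 6))
  lift F to Finset (EuclideanSpace ℝ (Fin d)) using hFfin
  have hFpos : 0 < #F := Finset.card_pos.2 (by simpa using hF.nonempty (by simp))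
  refine ⟨2 * (22880 * Real.pi * #F), by positivity, ?_⟩
  intro n ρ ζ x y a b δ Q hρ hζ hy hxy hyn hsep hδ hδab hlong hply
  have hunion : Icc a (b + δ) = Icc a b ∪ Icc (a + δ) (b + δ) := by
    rw [Icc_union_Icc' (by linarith) (by linarith), min_eq_left (by linarith),
      max_eq_right (by linarith)]
  have hratio : (b + δ - a) / (b + δ - b) = 1 + (b - a) / δ := by
    rw [add_sub_cancel_left]; field_simp; ring
  have hquery := ofReal_mul_sum_integral_le_sum_encard hF hρ hζ hy hxy hyn hsep (by linarith)
    (lt_add_of_pos_right b hδ) (hratio ▸ hlong) (hunion ▸ hply)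
  have hcount := hunion ▸ sum_encard_inter_union_le Q (Icc a b) (Icc (a + δ) (b + δ))
  set H := ∑ i, ∫ t in a..b, 1 / xRadius ρ ζ y i t
  by_contra! hfew
  refine (ENNReal.add_lt_add hfew.1 hfew.2).not_ge ((Eq.le ?_).trans (hquery.trans hcount))
  rw [← two_mul, ← ENNReal.ofReal_ofNat 2, ← ENNReal.ofReal_mul zero_le_two]
  congr 1
  field_simp

lemma log_one_add_two_pow_le : 12 * Real.log (1 + 2 ^ 55) ≤ 1010 := by
  have hlog : Real.log (1 + 2 ^ 55) ≤ Real.log (2 ^ 56) :=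
    Real.log_le_log (by norm_num) (by norm_num)
  rw [Real.log_pow] at hlog
  push_cast at hlog
  linarith [Real.log_two_lt_d9]

theorem stmt12 (d : ℕ) (hd : 1 ≤ d) :
    ∃ K : ℝ, 0 < K ∧
      ∀ (n : ℕ) (ρ : ℝ) (ζ : Fin n → ℝ → EuclideanSpace ℝ (Fin d)) (x y : ℕ)
        (a b : ℝ) (Q : Fin n → Set ℝ),
        0 ≤ ρ →
        (∀ i : Fin n, LipschitzWith 1 (ζ i)) →
        (∀ (t : ℝ) (i j : Fin n), i ≠ j → 2 * ρ ≤ dist (ζ i t) (ζ j t)) →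
        1 ≤ x → x < y → y ≤ n - 1 →
        (∀ (i : Fin n) (t : ℝ), 0 < xSep ρ (fun j => ζ j t) y i) →
        a < b →
        1010 * (n : ℝ) ≤
          ∑ i : Fin n, ∫ t in a..b, 1 / (ρ + xSep ρ (fun j => ζ j t) y i) →
        (∀ t ∈ Set.Icc a b ∪
            Set.Icc (a + (b - a) / 2 ^ 55) (b + (b - a) / 2 ^ 55),
          ∀ q : EuclideanSpace ℝ (Fin d),
          {i : Fin n | q ∈ uRegionM ρ (ζ i) (Q i) t}.ncard ≤ x) →
        ENNReal.ofReal
            ((((y : ℝ) - (x : ℝ) + 1) / (K * (y : ℝ))) *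
              ∑ i : Fin n, ∫ t in a..b, 1 / (ρ + xSep ρ (fun j => ζ j t) y i))
          ≤ ∑ i : Fin n, ((Q i ∩ Set.Icc a b).encard : ℝ≥0∞) ∨
        ENNReal.ofReal
            ((((y : ℝ) - (x : ℝ) + 1) / (K * (y : ℝ))) *
              ∑ i : Fin n, ∫ t in a..b, 1 / (ρ + xSep ρ (fun j => ζ j t) y i))
          ≤ ∑ i : Fin n,
              ((Q i ∩ Set.Icc (a + (b - a) / 2 ^ 55) (b + (b - a) / 2 ^ 55)).encard : ℝ≥0∞) := by
  obtain ⟨K, hK, hgeneral⟩ := stmt12_general d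
  refine ⟨K, hK, fun n ρ ζ x y a b Q hρ hζ _ _ hxy hyn hsep hab hlong hply ↦ ?_⟩
  have hlength : 0 < b - a := sub_pos.2 hab
  refine hgeneral n ρ ζ x y a b ((b - a) / 2 ^ 55) Q hρ hζ (by omega) hxy.le (by omega) hsep
    (by positivity) (div_le_self hlength.le (by norm_num)) (le_trans ?_ hlong) hply
  rw [div_div_cancel₀ hlength.ne', mul_right_comm]
  exact mul_le_mul_of_nonneg_right log_one_add_two_pow_le n.cast_nonneg
end

section
/- Let Z = (z_1, …, z_n) be a non-overlapping configuration of n entities of radius ρ ≥ 0 in ℝ^d, and let x be a positive integer with 2x ≤ n−1 and σ_i(x) > 0 for all i. Set φ_x := Σ_{i=1}^n 1/σ_i(x), φ_{2x} := Σ_{i=1}^n 1/σ_i(2x), and μ := 2^{1/d}·(Σ_{i=1}^n 1/r_i(2x)) / (Σ_{i=1}^n 1/r_i(x)). Then φ_{2x} ≥ (μ·λ_{d,x}/2^{1/d})·φ_x. -/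
open Metric Set

/-- `sepConst d x` is `c_{d,x}`: the infimum of all `c ≥ 0` for which there exist `x` closed
unit balls in `ℝ^d` with pairwise disjoint interiors, one of them distinguished, such that
every one of the `x` balls has its center at distance at most `2 + c` from the center of the
distinguished ball. -/
noncomputable def sepConst (d x : ℕ) : ℝ :=
  sInf {c : ℝ | 0 ≤ c ∧ ∃ z : Fin x → EuclideanSpace ℝ (Fin d),
    (∀ i j : Fin x, i ≠ j →
      Disjoint (interior (closedBall (z i) 1)) (interior (closedBall (z j) 1))) ∧
    ∃ i0 : Fin x, ∀ j : Fin x, dist (z j) (z i0) ≤ 2 + c}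

/-!
An entity together with `x - 1` of its `x` nearest neighbours is, after rescaling by `1 / ρ`, a
packing of `x` unit balls around a distinguished one, so `c_{d,x} * ρ ≤ σ_i(x)`. This bounds
`r_i(x) = ρ + σ_i(x)` in terms of `σ_i(x)` alone and gives `λ_{d,x} * φ_x ≤ ∑ 1 / r_i(x)`. On the
other hand `∑ 1 / r_i(y) ≤ φ_y` for every `y`, because `ρ ≥ 0`; multiplying the two bounds gives the
claim, in which the factors `2 ^ (1 / d)` cancel.
-/

section Packing

variable {d x : ℕ} {ι : Type*} {w : ι → EuclideanSpace ℝ (Fin d)} {s : Finset ι} {i₀ : ι}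

lemma sepConst_nonneg (d x : ℕ) : 0 ≤ sepConst d x :=
  Real.sInf_nonneg fun _ hc => hc.1

lemma sepConst_card_le_of_pairwise_two_le_dist {c : ℝ} (hc : 0 ≤ c) (hi₀ : i₀ ∈ s)
    (hsep : (s : Set ι).Pairwise fun i j => 2 ≤ dist (w i) (w j))
    (hnear : ∀ j ∈ s, dist (w j) (w i₀) ≤ 2 + c) :
    sepConst d s.card ≤ c := by
  let e : Fin s.card ≃ s := s.equivFin.symm
  refine csInf_le ⟨0, fun _ h => h.1⟩
    ⟨hc, fun k => w (e k), fun k l hkl => ?_, e.symm ⟨i₀, hi₀⟩, fun k => ?_⟩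
  · have hne : (e k : ι) ≠ e l := fun h => hkl (e.injective (Subtype.ext h))
    have hdist : 2 ≤ dist (w (e k)) (w (e l)) := hsep (e k).2 (e l).2 hne
    rw [interior_closedBall _ one_ne_zero, interior_closedBall _ one_ne_zero]
    exact ball_disjoint_ball (by linarith)
  · simpa using hnear _ (e k).2

lemma sepConst_le_of_pairwise_two_le_dist {c : ℝ} (hc : 0 ≤ c) (hi₀ : i₀ ∈ s)
    (hx : 1 ≤ x) (hcard : x ≤ s.card)
    (hsep : (s : Set ι).Pairwise fun i j => 2 ≤ dist (w i) (w j))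
    (hnear : ∀ j ∈ s, dist (w j) (w i₀) ≤ 2 + c) :
    sepConst d x ≤ c := by
  obtain ⟨t, hi₀t, hts, rfl⟩ := Finset.exists_subsuperset_card_eq
    (Finset.singleton_subset_iff.mpr hi₀) (by simpa using hx) hcard
  exact sepConst_card_le_of_pairwise_two_le_dist hc (Finset.singleton_subset_iff.mp hi₀t)
    (hsep.mono (Finset.coe_subset.mpr hts)) fun j hj => hnear j (hts hj)

lemma sepConst_mul_le_of_pairwise_le_dist {ρ r : ℝ} (hρ : 0 ≤ ρ) (hr : 0 ≤ r) (hi₀ : i₀ ∈ s)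
    (hx : 1 ≤ x) (hcard : x ≤ s.card)
    (hsep : (s : Set ι).Pairwise fun i j => 2 * ρ ≤ dist (w i) (w j))
    (hnear : ∀ j ∈ s, dist (w j) (w i₀) ≤ 2 * ρ + r) :
    sepConst d x * ρ ≤ r := by
  obtain rfl | hρ := hρ.eq_or_lt
  · simpa using hr
  have hscale (i j : ι) : dist (ρ⁻¹ • w i) (ρ⁻¹ • w j) = dist (w i) (w j) / ρ := by
    rw [dist_smul₀, Real.norm_of_nonneg (inv_nonneg.mpr hρ.le), inv_mul_eq_div]
  rw [← le_div_iff₀ hρ]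
  refine sepConst_le_of_pairwise_two_le_dist (w := fun i => ρ⁻¹ • w i) (by positivity) hi₀ hx hcard
    (fun i hi j hj hij => ?_) fun j hj => ?_
  · beta_reduce
    rw [hscale, le_div_iff₀ hρ]
    exact hsep hi hj hij
  · rw [hscale, div_le_iff₀ hρ, add_mul, div_mul_cancel₀ _ hρ.ne']
    exact hnear j hj

end Packing

section Separation

variable {d n : ℕ} {ρ : ℝ} {z : Fin n → EuclideanSpace ℝ (Fin d)} {x y : ℕ}

/-- The entities other than `i` at separation at most `r` from entity `i`. The set whose infimum
defines `xSep ρ z x i` consists of the `r` for which there are at least `x` of them. -/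
def entitiesWithin (ρ : ℝ) (z : Fin n → EuclideanSpace ℝ (Fin d)) (i : Fin n) (r : ℝ) :
    Set (Fin n) :=
  {j | j ≠ i ∧ dist (z i) (z j) - 2 * ρ ≤ r}

lemma entitiesWithin_nonempty {i : Fin n} {r : ℝ} (hx : 1 ≤ x)
    (hr : x ≤ (entitiesWithin ρ z i r).ncard) : (entitiesWithin ρ z i r).Nonempty :=
  nonempty_of_ncard_ne_zero (Nat.one_le_iff_ne_zero.mp (hx.trans hr))

lemma exists_le_ncard_entitiesWithin (hx : x < n) (i : Fin n) :
    ∃ r, x ≤ (entitiesWithin ρ z i r).ncard := by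
  obtain ⟨M, hM⟩ := (finite_range fun j => dist (z i) (z j) - 2 * ρ).bddAbove
  have hall : entitiesWithin ρ z i M = {i}ᶜ :=
    Set.ext fun j => and_iff_left (hM (mem_range_self j))
  refine ⟨M, ?_⟩
  rw [hall, ncard_compl, ncard_singleton, Nat.card_eq_fintype_card, Fintype.card_fin]
  exact Nat.le_sub_one_of_lt hx

lemma bddBelow_setOf_le_ncard_entitiesWithin (hx : 1 ≤ x) (i : Fin n) :
    BddBelow {r | x ≤ (entitiesWithin ρ z i r).ncard} := by
  refine ⟨-(2 * ρ), fun r hr => ?_⟩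
  obtain ⟨j, -, hj⟩ := entitiesWithin_nonempty hx hr
  linarith [dist_nonneg (x := z i) (y := z j)]

lemma xSep_mono (hx : 1 ≤ x) (hxy : x ≤ y) (hy : y < n) (i : Fin n) :
    xSep ρ z x i ≤ xSep ρ z y i :=
  csInf_le_csInf (bddBelow_setOf_le_ncard_entitiesWithin hx i)
    (exists_le_ncard_entitiesWithin hy i) fun _ => hxy.trans

lemma sepConst_mul_le_of_le_ncard_entitiesWithin (hρ : 0 ≤ ρ)
    (hsep : Pairwise fun i j => 2 * ρ ≤ dist (z i) (z j)) {i : Fin n} {r : ℝ} (hx : 1 ≤ x)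
    (hr : x ≤ (entitiesWithin ρ z i r).ncard) : sepConst d x * ρ ≤ r := by
  classical
  have hr₀ : 0 ≤ r := by
    obtain ⟨j, hji, hj⟩ := entitiesWithin_nonempty hx hr
    linarith [hsep hji.symm]
  have hcard : x ≤ (insert i (entitiesWithin ρ z i r).toFinset).card := by
    rw [ncard_eq_toFinset_card'] at hr
    exact hr.trans (Finset.card_le_card (Finset.subset_insert _ _))
  refine sepConst_mul_le_of_pairwise_le_dist hρ hr₀ (Finset.mem_insert_self _ _) hx hcard
    (fun j _ k _ hjk => hsep hjk) fun j hj => ?_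
  obtain rfl | hj := Finset.mem_insert.mp hj
  · rw [dist_self]
    positivity
  · rw [dist_comm, ← sub_le_iff_le_add']
    exact (mem_toFinset.mp hj).2

lemma sepConst_mul_le_xSep (hρ : 0 ≤ ρ) (hsep : Pairwise fun i j => 2 * ρ ≤ dist (z i) (z j))
    (hx : 1 ≤ x) (hxn : x < n) (i : Fin n) : sepConst d x * ρ ≤ xSep ρ z x i :=
  le_csInf (exists_le_ncard_entitiesWithin hxn i) fun _ =>
    sepConst_mul_le_of_le_ncard_entitiesWithin hρ hsep hx

end Separation

lemma div_one_add_mul_one_div_le {c ρ σ : ℝ} (hc : 0 ≤ c) (hρ : 0 ≤ ρ) (hσ : 0 < σ)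
    (h : c * ρ ≤ σ) : c / (1 + c) * (1 / σ) ≤ 1 / (ρ + σ) := by
  rw [div_mul_div_comm, div_le_div_iff₀ (by positivity) (by positivity)]
  linarith

lemma sum_one_div_add_le_sum_one_div {ι : Type*} {s : Finset ι} {ρ : ℝ} {σ : ι → ℝ} (hρ : 0 ≤ ρ)
    (hσ : ∀ i ∈ s, 0 < σ i) : ∑ i ∈ s, 1 / (ρ + σ i) ≤ ∑ i ∈ s, 1 / σ i :=
  Finset.sum_le_sum fun i hi =>
    one_div_le_one_div_of_le (hσ i hi) (le_add_of_nonneg_left hρ)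

section Potential

variable {d n : ℕ} {ρ : ℝ} {z : Fin n → EuclideanSpace ℝ (Fin d)} {x y : ℕ}

lemma sepConst_div_mul_sum_one_div_xSep_le (hρ : 0 ≤ ρ)
    (hsep : Pairwise fun i j => 2 * ρ ≤ dist (z i) (z j)) (hx : 1 ≤ x) (hxn : x < n)
    (hpos : ∀ i, 0 < xSep ρ z x i) :
    sepConst d x / (1 + sepConst d x) * ∑ i, 1 / xSep ρ z x i ≤
      ∑ i, 1 / (ρ + xSep ρ z x i) := by
  rw [Finset.mul_sum]
  exact Finset.sum_le_sum fun i _ => div_one_add_mul_one_div_le (sepConst_nonneg d x) hρ (hpos i)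
    (sepConst_mul_le_xSep hρ hsep hx hxn i)

theorem stmt15_general (hρ : 0 ≤ ρ) (hsep : Pairwise fun i j => 2 * ρ ≤ dist (z i) (z j))
    (hx : 1 ≤ x) (hxn : x < n) (hxpos : ∀ i, 0 < xSep ρ z x i) (hypos : ∀ i, 0 < xSep ρ z y i) :
    (∑ i, 1 / (ρ + xSep ρ z y i)) / (∑ i, 1 / (ρ + xSep ρ z x i)) *
        (sepConst d x / (1 + sepConst d x)) * ∑ i, 1 / xSep ρ z x i ≤
      ∑ i, 1 / xSep ρ z y i := by
  have hradius_nonneg {k : ℕ} (hk : ∀ i, 0 < xSep ρ z k i) : 0 ≤ ∑ i, 1 / (ρ + xSep ρ z k i) :=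
    Finset.sum_nonneg fun i _ => one_div_nonneg.mpr (add_nonneg hρ (hk i).le)
  calc
    _ = (∑ i, 1 / (ρ + xSep ρ z y i)) *
          ((sepConst d x / (1 + sepConst d x) * ∑ i, 1 / xSep ρ z x i) /
            ∑ i, 1 / (ρ + xSep ρ z x i)) := by ring
    _ ≤ ∑ i, 1 / (ρ + xSep ρ z y i) :=
      mul_le_of_le_one_right (hradius_nonneg hypos) <| div_le_one_of_le₀
        (sepConst_div_mul_sum_one_div_xSep_le hρ hsep hx hxn hxpos) (hradius_nonneg hxpos)
    _ ≤ ∑ i, 1 / xSep ρ z y i := sum_one_div_add_le_sum_one_div hρ fun i _ => hypos i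

end Potential

theorem stmt15 (d n : ℕ) (hd : 1 ≤ d) (ρ : ℝ) (hρ : 0 ≤ ρ)
    (z : Fin n → EuclideanSpace ℝ (Fin d))
    (hsep : ∀ i j : Fin n, i ≠ j → 2 * ρ ≤ dist (z i) (z j))
    (x : ℕ) (hx1 : 1 ≤ x) (hxn : 2 * x ≤ n - 1)
    (hpos : ∀ i : Fin n, 0 < xSep ρ z x i) :
    ((((2 : ℝ) ^ ((1 : ℝ) / d) * ∑ i : Fin n, 1 / (ρ + xSep ρ z (2 * x) i)) /
          (∑ i : Fin n, 1 / (ρ + xSep ρ z x i))) *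
        (sepConst d x / (1 + sepConst d x)) / (2 : ℝ) ^ ((1 : ℝ) / d)) *
        (∑ i : Fin n, 1 / xSep ρ z x i)
      ≤ ∑ i : Fin n, 1 / xSep ρ z (2 * x) i := by
  have hpos2 (i : Fin n) : 0 < xSep ρ z (2 * x) i :=
    (hpos i).trans_le (xSep_mono hx1 (by omega) (by omega) i)
  convert stmt15_general hρ (fun i j => hsep i j) hx1 (by omega) hpos hpos2 using 2
  field_simp
end

section
/- Let d ≥ 1, let x ≤ y be positive integers with y + 1 even, and set D := 4·(1 + y − x). Consider n = y + 1 stationary point entities (radius ρ = 0) in ℝ^d, with (y+1)/2 of them located at a point P and (y+1)/2 at a point Q, where ‖P − Q‖ = D. Then for every query schedule whose uncertainty degree is at most y at every time of a bounded interval I: every entity has a query time in every sub-interval (s, s + D] contained in I, and consequently the total number of queries during I is at least (y + 1)·⌊|I|/D⌋. -/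
open Metric Set
open scoped ENNReal

open Classical in
/-- The uncertainty region at time `t` of a stationary entity of radius `ρ` centered at `z`
with query-time set `Q`: the closed ball about `z` of radius `ρ + (t - p(t))` where `p(t)` is
the last query time at or before `t`, and all of space if there is no query time before `t`. -/
noncomputable def uRegion {d : ℕ} (ρ : ℝ) (z : EuclideanSpace ℝ (Fin d))
    (Q : Set ℝ) (t : ℝ) : Set (EuclideanSpace ℝ (Fin d)) :=
  if (Q ∩ Set.Iic t).Nonempty then
    closedBall z (ρ + (t - sSup (Q ∩ Set.Iic t)))
  else Set.univ

/-!
An entity left unqueried during `(t - D, t]` has at time `t` an uncertainty region of radius at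
least `ρ + D`, while every other region has radius at least `ρ`. If all centers are within `D + 2ρ`
of each other, its region meets all the others and its degree is the number of entities.
So each entity is queried in every window of length `D`, and `[a, b]` contains `⌊(b - a) / D⌋`
disjoint such windows.
-/

section Counting

lemma card_le_encard_of_pairwise_disjoint_of_inter_nonempty {ι α : Type*} {A : Set α}
    {s : ι → Set α} (hdisj : Pairwise (Function.onFun Disjoint s))
    (hmeet : ∀ i, (A ∩ s i).Nonempty) :
    ENat.card ι ≤ A.encard := by
  choose f hfA hfs using hmeet
  have hf : Function.Injective f := fun i j hij =>
    hdisj.eq (Set.not_disjoint_iff.2 ⟨f i, hfs i, hij ▸ hfs j⟩)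
  calc ENat.card ι = (range f).encard := by rw [← image_univ, hf.encard_image, encard_univ]
    _ ≤ A.encard := encard_le_encard (range_subset_iff.2 hfA)

variable {K : Type*} [Field K] [LinearOrder K] [IsStrictOrderedRing K] [FloorSemiring K]

lemma Ioc_add_mul_subset_Icc {a b D : K} (hD : 0 < D) {m : ℕ} (hm : m < ⌊(b - a) / D⌋₊) :
    Ioc (a + m * D) (a + m * D + D) ⊆ Icc a b := by
  have hright : ((m + 1 : ℕ) : K) * D ≤ b - a :=
    (le_div_iff₀ hD).1 ((Nat.le_floor_iff' m.succ_ne_zero).1 hm)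
  have hleft : 0 ≤ (m : K) * D := by positivity
  push_cast at hright
  exact Ioc_subset_Icc_self.trans (Icc_subset_Icc (by linarith) (by linarith))

lemma floor_div_le_encard_inter_Icc {A : Set K} {a b D : K} (hD : 0 < D)
    (hmeet : ∀ s, Ioc s (s + D) ⊆ Icc a b → (A ∩ Ioc s (s + D)).Nonempty) :
    (⌊(b - a) / D⌋₊ : ℕ∞) ≤ (A ∩ Icc a b).encard := by
  let window (m : Fin ⌊(b - a) / D⌋₊) : Set K := Ioc (a + (m : ℕ) * D) (a + (m : ℕ) * D + D)
  have hsub (m) : window m ⊆ Icc a b := Ioc_add_mul_subset_Icc hD m.isLt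
  have hdisj : Pairwise (Function.onFun Disjoint window) := by
    intro m n hmn
    simpa [Function.onFun, window, add_mul, add_assoc] using
      pairwise_disjoint_Ioc_add_zsmul a D
        (Nat.cast_injective.ne (Fin.val_injective.ne hmn) : ((m : ℕ) : ℤ) ≠ (n : ℕ))
  have hne (m) : (A ∩ Icc a b ∩ window m).Nonempty := by
    rw [inter_assoc, inter_eq_self_of_subset_right (hsub m)]
    exact hmeet _ (hsub m)
  simpa using card_le_encard_of_pairwise_disjoint_of_inter_nonempty hdisj hne

end Counting

lemma dist_le_dist_of_two_locations {ι X : Type*} [PseudoMetricSpace X] {z : ι → X} {P R : X}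
    {S : Set ι} (hP : ∀ i ∈ S, z i = P) (hR : ∀ i ∉ S, z i = R) (i j : ι) :
    dist (z i) (z j) ≤ dist P R := by
  by_cases hi : i ∈ S <;> by_cases hj : j ∈ S <;> simp [hP, hR, hi, hj, dist_comm]

section Uncertainty

variable {d : ℕ}

lemma closedBall_subset_uRegion (ρ : ℝ) (z : EuclideanSpace ℝ (Fin d)) {Q : Set ℝ} {t r : ℝ}
    (hQ : ¬(Q ∩ Ioc (t - r) t).Nonempty) : closedBall z (ρ + r) ⊆ uRegion ρ z Q t := by
  unfold uRegion
  split_ifs with hquery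
  · have hlast : sSup (Q ∩ Iic t) ≤ t - r := csSup_le hquery fun q hq =>
      le_of_not_gt fun hlt => hQ ⟨q, hq.1, hlt, hq.2⟩
    exact closedBall_subset_closedBall (by linarith)
  · exact subset_univ _

lemma uRegion_inter_uRegion_nonempty {ρ D t : ℝ} (hρ : 0 ≤ ρ) (hD : 0 ≤ D)
    {z z' : EuclideanSpace ℝ (Fin d)} (hz : dist z z' ≤ D + 2 * ρ) {Q : Set ℝ} (Q' : Set ℝ)
    (hQ : ¬(Q ∩ Ioc (t - D) t).Nonempty) :
    (uRegion ρ z Q t ∩ uRegion ρ z' Q' t).Nonempty := by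
  have hballs : (closedBall z (ρ + D) ∩ closedBall z' (ρ + 0)).Nonempty := by
    rw [← not_disjoint_iff_nonempty_inter, disjoint_closedBall_closedBall_iff (by positivity)
      (by positivity)]
    linarith
  exact hballs.mono (inter_subset_inter (closedBall_subset_uRegion ρ z hQ)
    (closedBall_subset_uRegion ρ z' (by simp)))

variable {ι : Type*}

/-- The uncertainty degree of entity `i` at time `t`: the number of entities, `i` included, whose
uncertainty region meets that of `i`. Being an `ncard`, it is `0` if there are infinitely many. -/
noncomputable def uncertaintyDegree (ρ : ℝ) (z : ι → EuclideanSpace ℝ (Fin d)) (Q : ι → Set ℝ)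
    (t : ℝ) (i : ι) : ℕ :=
  {j | (uRegion ρ (z i) (Q i) t ∩ uRegion ρ (z j) (Q j) t).Nonempty}.ncard

lemma inter_Ioc_nonempty_of_uncertaintyDegree_lt {ρ D t : ℝ} (hρ : 0 ≤ ρ) (hD : 0 ≤ D)
    {z : ι → EuclideanSpace ℝ (Fin d)} {Q : ι → Set ℝ} {i : ι}
    (hz : ∀ j, dist (z i) (z j) ≤ D + 2 * ρ) (hdeg : uncertaintyDegree ρ z Q t i < Nat.card ι) :
    (Q i ∩ Ioc (t - D) t).Nonempty := by
  by_contra hQ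
  have hall : {j | (uRegion ρ (z i) (Q i) t ∩ uRegion ρ (z j) (Q j) t).Nonempty} = univ :=
    eq_univ_of_forall fun j => uRegion_inter_uRegion_nonempty hρ hD (hz j) (Q j) hQ
  rw [uncertaintyDegree, hall, ncard_univ] at hdeg
  exact hdeg.false

theorem stmt16_general [Fintype ι] {ρ D : ℝ} (hρ : 0 ≤ ρ) (hD : 0 < D)
    {z : ι → EuclideanSpace ℝ (Fin d)} (hz : ∀ i j, dist (z i) (z j) ≤ D + 2 * ρ)
    {Q : ι → Set ℝ} {a b : ℝ}
    (hdeg : ∀ t ∈ Icc a b, ∀ i, uncertaintyDegree ρ z Q t i < Fintype.card ι) :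
    (∀ i s, Ioc s (s + D) ⊆ Icc a b → (Q i ∩ Ioc s (s + D)).Nonempty) ∧
      (Fintype.card ι * ⌊(b - a) / D⌋₊ : ℕ∞) ≤ ∑ i, (Q i ∩ Icc a b).encard := by
  have hquery (i : ι) (s : ℝ) (hs : Ioc s (s + D) ⊆ Icc a b) :
      (Q i ∩ Ioc s (s + D)).Nonempty := by
    have hlt := hdeg (s + D) (hs (right_mem_Ioc.2 (lt_add_of_pos_right s hD))) i
    rw [← Nat.card_eq_fintype_card] at hlt
    simpa only [add_sub_cancel_right] using
      inter_Ioc_nonempty_of_uncertaintyDegree_lt hρ hD.le (hz i) hlt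
  refine ⟨hquery, ?_⟩
  calc (Fintype.card ι * ⌊(b - a) / D⌋₊ : ℕ∞) = ∑ _i : ι, (⌊(b - a) / D⌋₊ : ℕ∞) := by simp
    _ ≤ ∑ i, (Q i ∩ Icc a b).encard :=
      Finset.sum_le_sum fun i _ => floor_div_le_encard_inter_Icc hD (hquery i)

end Uncertainty

theorem stmt16 (d : ℕ) (hd : 1 ≤ d) (x y : ℕ) (hx : 1 ≤ x) (hxy : x ≤ y)
    (heven : Even (y + 1))
    (z : Fin (y + 1) → EuclideanSpace ℝ (Fin d))
    (P R : EuclideanSpace ℝ (Fin d))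
    (hPR : dist P R = 4 * (1 + (y : ℝ) - (x : ℝ)))
    (S : Finset (Fin (y + 1))) (hS : 2 * S.card = y + 1)
    (hzP : ∀ i ∈ S, z i = P) (hzR : ∀ i ∉ S, z i = R)
    (Q : Fin (y + 1) → Set ℝ) (a b : ℝ) (hab : a ≤ b)
    (hdeg : ∀ t ∈ Set.Icc a b, ∀ i : Fin (y + 1),
      {j : Fin (y + 1) |
          (uRegion 0 (z i) (Q i) t ∩ uRegion 0 (z j) (Q j) t).Nonempty}.ncard ≤ y) :
    (∀ (i : Fin (y + 1)) (s : ℝ),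
        Set.Ioc s (s + 4 * (1 + (y : ℝ) - (x : ℝ))) ⊆ Set.Icc a b →
        (Q i ∩ Set.Ioc s (s + 4 * (1 + (y : ℝ) - (x : ℝ)))).Nonempty) ∧
      (((y + 1) * ⌊(b - a) / (4 * (1 + (y : ℝ) - (x : ℝ)))⌋₊ : ℕ∞) ≤
        ∑ i : Fin (y + 1), (Q i ∩ Set.Icc a b).encard) := by
  have hD : 0 < 4 * (1 + (y : ℝ) - x) := by
    have : (x : ℝ) ≤ y := Nat.cast_le.2 hxy
    linarith
  have hz (i j) : dist (z i) (z j) ≤ 4 * (1 + (y : ℝ) - x) + 2 * 0 := by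
    simpa [hPR] using dist_le_dist_of_two_locations (S := (S : Set (Fin (y + 1)))) hzP hzR i j
  simpa using stmt16_general le_rfl hD hz (Q := Q) (a := a) (b := b) fun t ht i => by
    simpa [uncertaintyDegree, Nat.lt_succ_iff] using hdeg t ht i
end
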